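/- arXiv:1907.09405 — 3 statements merged into one kernel-verified Lean document; each statement's English description precedes it below -/
import Mathlib

section
/- Fix a color i ∈ [q], a constant η with 0 < η ≤ 1, and set γ_a = η/(20α_i). Then with high probability there do not exist sets S ⊆ A and T ⊆ B with γ_a·log n ≤ |S| ≤ γ_a·n/log n and |T| ≤ α_i·η·|S|·log n for which e_i(S,T) > 2·α_i·η·|S|·log n. -/
open MeasureTheory Filter Finset Asymptotics

/-- Discrete measurable structure on edge states: `none` = non-edge, `some i` = edge of color `cᵢ`. -/
instance (q : ℕ) : MeasurableSpace (Option (Fin q)) := ⊤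

/-- Distribution of the state of a single pair: non-edge with probability `1-p`,
an edge of color `cᵢ` with probability `αᵢ·p`. -/
noncomputable def colorM (q : ℕ) (α : Fin q → ℝ) (p : ℝ) : Measure (Option (Fin q)) :=
  ENNReal.ofReal (1 - p) • Measure.dirac none +
    ∑ i : Fin q, ENNReal.ofReal (α i * p) • Measure.dirac (some i)

/-- The randomly colored random bipartite graph on parts `A = B = Fin n`:
independently, each pair `(a,b)` is a non-edge with probability `1-p` and an
edge of color `cᵢ` with probability `αᵢ·p`.  A sample is a function
`f : Fin n × Fin n → Option (Fin q)`. -/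
noncomputable def graphM (n q : ℕ) (α : Fin q → ℝ) (p : ℝ) :
    Measure (Fin n × Fin n → Option (Fin q)) :=
  Measure.pi fun _ => colorM q α p

/-!
Fix `S` with `s = |S|` and let `t = αᵢ η s log n` be the size bound on `T`. The expected number of
edges of color `cᵢ` between `S` and `T` is at most `3 αᵢ s t log n / (2 n)`, so the Chernoff bound
for more than `2 t` such edges beats the roughly `(e n / t) ^ t` choices of `T`: once
`s ≤ η n / (20 αᵢ log n)`, the set `S` fails with probability at most `(12 x) ^ t`, where
`x = αᵢ s log n / (η n) ≤ 1 / 20`. Since `t / s = αᵢ η log n` tends to infinity, `(12 x) ^ t` is at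
most `(R s / n) ^ s` with `R → 0`, and summing over the `(n choose s) ≤ (e n / s) ^ s` choices of
`S` leaves a geometric series of order `R`.
-/

open ProbabilityTheory Topology

section Chernoff

variable {ι Ω : Type*} [MeasurableSpace Ω] {μ : Measure Ω} {A : ι → Set Ω}

lemma mgf_indicator_one_le [IsProbabilityMeasure μ] {B : Set Ω} (hB : MeasurableSet B) (θ : ℝ) :
    mgf (B.indicator fun _ ↦ 1) μ θ ≤ Real.exp ((Real.exp θ - 1) * μ.real B) := by
  have hexp : (fun ω ↦ Real.exp (θ * B.indicator (fun _ ↦ 1) ω)) =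
      fun ω ↦ 1 + B.indicator (fun _ ↦ Real.exp θ - 1) ω := by
    ext ω
    by_cases hω : ω ∈ B <;> simp [hω]
  have hmgf : mgf (B.indicator fun _ ↦ 1) μ θ = (Real.exp θ - 1) * μ.real B + 1 := by
    rw [mgf, hexp, integral_add (integrable_const _) ((integrable_const _).indicator hB),
      integral_indicator_const _ hB]
    simp only [integral_const, probReal_univ, smul_eq_mul]
    ring
  exact hmgf.trans_le (Real.add_one_le_exp _)

lemma measureReal_le_card_filter_le [∀ j, DecidablePred (· ∈ A j)] (hA : iIndepSet A μ)
    (hmeas : ∀ j, MeasurableSet (A j)) (U : Finset ι) {l : ℝ} (hl : 1 ≤ l) (m : ℝ) :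
    μ.real {ω | m ≤ #{j ∈ U | ω ∈ A j}} ≤
      l ^ (-m) * Real.exp ((l - 1) * ∑ j ∈ U, μ.real (A j)) := by
  have := hA.isProbabilityMeasure
  set X : ι → Ω → ℝ := fun j ↦ (A j).indicator fun _ ↦ 1
  have hX (j : ι) : Measurable (X j) := measurable_const.indicator (hmeas j)
  have hsum (ω : Ω) : (∑ j ∈ U, X j) ω = #{j ∈ U | ω ∈ A j} := by
    simp [X, Finset.sum_apply, Set.indicator_apply, Finset.sum_boole]
  have hint : Integrable (fun ω ↦ Real.exp (Real.log l * (∑ j ∈ U, X j) ω)) μ := by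
    refine Integrable.of_bound (C := Real.exp (Real.log l * #U)) (by fun_prop)
      (.of_forall fun ω ↦ ?_)
    rw [Real.norm_of_nonneg (Real.exp_nonneg _), hsum]
    gcongr
    · exact Real.log_nonneg hl
    · exact filter_subset _ _
  have hl₀ : 0 < l := by positivity
  calc μ.real {ω | m ≤ #{j ∈ U | ω ∈ A j}}
      = μ.real {ω | m ≤ (∑ j ∈ U, X j) ω} := by simp only [hsum]
    _ ≤ Real.exp (-Real.log l * m) * mgf (∑ j ∈ U, X j) μ (Real.log l) :=
        measure_ge_le_exp_mul_mgf m (Real.log_nonneg hl) hint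
    _ = l ^ (-m) * ∏ j ∈ U, mgf (X j) μ (Real.log l) := by
        rw [hA.iIndepFun_indicator.mgf_sum hX, Real.rpow_def_of_pos hl₀, neg_mul_comm]
    _ ≤ l ^ (-m) * ∏ j ∈ U, Real.exp ((l - 1) * μ.real (A j)) := by
        gcongr with j
        · exact fun _ _ ↦ mgf_nonneg
        · simpa only [Real.exp_log hl₀] using mgf_indicator_one_le (hmeas j) (Real.log l)
    _ = l ^ (-m) * Real.exp ((l - 1) * ∑ j ∈ U, μ.real (A j)) := by
        rw [← Real.exp_sum, mul_sum]

end Chernoff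

lemma iIndepSet_pi {ι : Type*} [Fintype ι] {X : ι → Type*} [∀ j, MeasurableSpace (X j)]
    {μ : ∀ j, Measure (X j)} [∀ j, IsProbabilityMeasure (μ j)] {A : ∀ j, Set (X j)}
    (hA : ∀ j, MeasurableSet (A j)) : iIndepSet (fun j ↦ {x | x j ∈ A j}) (Measure.pi μ) :=
  iIndep_comap_mem_iff.1 (iIndepFun_pi fun j ↦ (measurable_mem.2 (hA j)).aemeasurable)

lemma card_filter_card_le_le {V : Type*} [Fintype V] {t : ℝ} (ht : 0 < t)
    (htV : t ≤ Fintype.card V) :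
    (#{T : Finset V | (#T : ℝ) ≤ t} : ℝ) ≤ Real.exp t * (Fintype.card V / t) ^ t := by
  obtain ⟨n, hn⟩ : ∃ n : ℝ, (Fintype.card V : ℝ) = n := ⟨_, rfl⟩
  rw [hn] at htV ⊢
  have hn₀ : 0 < n := ht.trans_le htV
  have hmarkov : #{T : Finset V | (#T : ℝ) ≤ t} * (t / n) ^ t ≤ ∑ T : Finset V, (t / n) ^ #T := by
    rw [← nsmul_eq_mul]
    refine (card_nsmul_le_sum _ (fun T ↦ (t / n) ^ #T) _ fun T hT ↦ ?_).trans
      (sum_le_sum_of_subset_of_nonneg (filter_subset _ _) fun _ _ _ ↦ by positivity)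
    rw [← Real.rpow_natCast]
    exact Real.rpow_le_rpow_of_exponent_ge (by positivity) ((div_le_one hn₀).2 htV)
      (mem_filter.1 hT).2
  have hsum : ∑ T : Finset V, (t / n) ^ #T = (t / n + 1) ^ Fintype.card V := by
    simpa only [one_pow, mul_one] using Fintype.sum_pow_mul_eq_add_pow V (t / n) 1
  have hexp : (t / n + 1) ^ Fintype.card V ≤ Real.exp t := by
    calc (t / n + 1) ^ Fintype.card V ≤ Real.exp (t / n) ^ Fintype.card V := by
          gcongr
          exact Real.add_one_le_exp _
      _ = Real.exp t := by rw [← Real.exp_nat_mul, hn, mul_div_cancel₀ _ hn₀.ne']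
  rw [← inv_div t n, Real.inv_rpow (by positivity), ← div_eq_mul_inv, le_div_iff₀ (by positivity)]
  exact hmarkov.trans (hsum.trans_le hexp)

lemma choose_mul_div_pow_le_exp (n k : ℕ) :
    (n.choose k : ℝ) * ((k : ℝ) / n) ^ k ≤ Real.exp k := by
  calc (n.choose k : ℝ) * ((k : ℝ) / n) ^ k
      ≤ (n : ℝ) ^ k / k.factorial * ((k : ℝ) / n) ^ k := by
        gcongr
        exact Nat.choose_le_pow_div k n
    _ = (n * ((k : ℝ) / n)) ^ k / k.factorial := by rw [mul_pow, div_mul_eq_mul_div]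
    _ ≤ (k : ℝ) ^ k / k.factorial := by
        gcongr
        rw [mul_div_left_comm]
        exact mul_le_of_le_one_right k.cast_nonneg (div_self_le_one _)
    _ ≤ Real.exp k := Real.pow_div_factorial_le_exp _ k.cast_nonneg k

lemma sum_nonempty_mul_card_div_pow_card_le {V : Type*} [Fintype V] {R : ℝ} (hR : 0 ≤ R)
    (hR' : Real.exp 1 * R ≤ 1 / 2) :
    ∑ S : Finset V with S.Nonempty, (R * ((#S : ℝ) / Fintype.card V)) ^ #S ≤
      2 * (Real.exp 1 * R) := by
  set n := Fintype.card V with hn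
  have hsum : ∑ S : Finset V with S.Nonempty, (R * ((#S : ℝ) / n)) ^ #S =
      ∑ k ∈ range n, n.choose (k + 1) * (R * (((k + 1 : ℕ) : ℝ) / n)) ^ (k + 1) := by
    have h := sum_powerset_apply_card
      (fun k : ℕ ↦ if 0 < k then (R * ((k : ℝ) / n)) ^ k else 0) (x := (univ : Finset V))
    simpa [sum_filter, sum_range_succ', ← card_pos, card_univ, ← hn] using h
  calc ∑ S : Finset V with S.Nonempty, (R * ((#S : ℝ) / n)) ^ #S
      = ∑ k ∈ range n, n.choose (k + 1) * (R * (((k + 1 : ℕ) : ℝ) / n)) ^ (k + 1) := hsum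
    _ ≤ ∑ k ∈ range n, Real.exp 1 * R * (1 / 2) ^ k := by
        refine sum_le_sum fun k _ ↦ ?_
        calc n.choose (k + 1) * (R * (((k + 1 : ℕ) : ℝ) / n)) ^ (k + 1)
            = n.choose (k + 1) * (((k + 1 : ℕ) : ℝ) / n) ^ (k + 1) * R ^ (k + 1) := by
              rw [mul_pow]; ring
          _ ≤ Real.exp (k + 1 : ℕ) * R ^ (k + 1) := by
              gcongr
              exact choose_mul_div_pow_le_exp n (k + 1)
          _ = Real.exp 1 * R * (Real.exp 1 * R) ^ k := by
              rw [← pow_succ', mul_pow, ← Real.exp_nat_mul, mul_one]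
          _ ≤ Real.exp 1 * R * (1 / 2) ^ k := by gcongr
    _ = Real.exp 1 * R * ∑ k ∈ range n, (1 / 2 : ℝ) ^ k := (mul_sum _ _ _).symm
    _ ≤ Real.exp 1 * R * 2 := by
        gcongr
        exact sum_geometric_two_le n
    _ = 2 * (Real.exp 1 * R) := mul_comm _ _

lemma tendsto_measure_compl_one {β : Type*} {F : Filter β} {Ω : β → Type*}
    [∀ b, MeasurableSpace (Ω b)] {μ : ∀ b, Measure (Ω b)} {A : ∀ b, Set (Ω b)}
    (hμ : ∀ᶠ b in F, IsProbabilityMeasure (μ b)) (hA : ∀ b, MeasurableSet (A b))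
    (h : Tendsto (fun b ↦ (μ b).real (A b)) F (𝓝 0)) :
    Tendsto (fun b ↦ μ b (A b)ᶜ) F (𝓝 1) := by
  have hlim := ENNReal.tendsto_ofReal (h.const_sub 1)
  rw [sub_zero, ENNReal.ofReal_one] at hlim
  refine hlim.congr' (hμ.mono fun b _ ↦ ?_)
  rw [← probReal_compl_eq_one_sub (hA b), ofReal_measureReal]

/-- A set `S` contributes at most `(unionRate η u * |S| / n) ^ |S|` to the union bound over pairs
`(S, T)` with `|T| ≤ u * |S|`, where `u = αᵢ * η * log n`. -/
noncomputable def unionRate (η u : ℝ) : ℝ :=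
  20 / η ^ 2 * u * (3 / 5) ^ u

lemma tendsto_unionRate (η : ℝ) : Tendsto (unionRate η) atTop (𝓝 0) := by
  have hlog : 0 < -Real.log (3 / 5) := neg_pos.2 (Real.log_neg (by norm_num) (by norm_num))
  have h := (tendsto_rpow_mul_exp_neg_mul_atTop_nhds_zero 1 _ hlog).const_mul (20 / η ^ 2)
  rw [mul_zero] at h
  refine h.congr fun u ↦ ?_
  rw [unionRate, Real.rpow_one, neg_neg, mul_assoc,
    Real.rpow_def_of_pos (by norm_num : (0 : ℝ) < 3 / 5)]

lemma exp_three_lt_twenty_one : Real.exp 3 < 21 := by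
  calc Real.exp 3 = Real.exp 1 ^ 3 := by rw [← Real.exp_nat_mul]; norm_num
    _ < 2.72 ^ 3 := by
        gcongr
        exact Real.exp_one_lt_d9.trans (by norm_num)
    _ < 21 := by norm_num

lemma rpow_le_unionRate_mul_rpow {η u s n : ℝ} (hη : 0 < η) (hu : 1 ≤ u) (hs : 0 < s)
    (hn : 0 < n) (hsn : u * s ≤ η ^ 2 * n / 20) :
    (Real.exp 3 * (n / (u * s)) * (s * (3 * u / (2 * η * n)) / 2) ^ 2) ^ (u * s) ≤
      (unionRate η u * (s / n)) ^ s := by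
  obtain ⟨x, hx⟩ : ∃ x : ℝ, u * s / (η ^ 2 * n) = x := ⟨_, rfl⟩
  have hx₀ : 0 < x := hx ▸ by positivity
  have hx₁ : x ≤ 1 / 20 := by
    rw [← hx, div_le_iff₀ (by positivity)]
    linarith
  have hbase : Real.exp 3 * (n / (u * s)) * (s * (3 * u / (2 * η * n)) / 2) ^ 2 ≤ 12 * x := by
    calc Real.exp 3 * (n / (u * s)) * (s * (3 * u / (2 * η * n)) / 2) ^ 2
        = Real.exp 3 * (9 / 16) * x := by
          rw [← hx]
          field_simp
          norm_num
      _ ≤ 12 * x := by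
          gcongr
          linarith [exp_three_lt_twenty_one]
  have hpow : (12 * x) ^ u ≤ unionRate η u * (s / n) := by
    calc (12 * x) ^ u = (12 * x) ^ (u - 1) * (12 * x) := by
          rw [← Real.rpow_add_one (by positivity), sub_add_cancel]
      _ ≤ (3 / 5) ^ (u - 1) * (12 * x) := by
          gcongr
          linarith
      _ = unionRate η u * (s / n) := by
          rw [unionRate, ← hx, Real.rpow_sub_one (by norm_num)]
          field_simp
          norm_num
  calc (Real.exp 3 * (n / (u * s)) * (s * (3 * u / (2 * η * n)) / 2) ^ 2) ^ (u * s)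
      ≤ (12 * x) ^ (u * s) := by gcongr
    _ = ((12 * x) ^ u) ^ s := Real.rpow_mul (by positivity) u s
    _ ≤ (unionRate η u * (s / n)) ^ s := by gcongr

section ColoredBipartiteGraph

variable {n q : ℕ} {α : Fin q → ℝ} {p : ℝ} {i : Fin q}

/-- The number `e_i(S, T)` of edges of color `cᵢ` between `S ⊆ A` and `T ⊆ B` in the colored
bipartite graph `f`. -/
def edgeCount (f : Fin n × Fin n → Option (Fin q)) (i : Fin q) (S T : Finset (Fin n)) : ℕ :=
  #{e ∈ S ×ˢ T | f e = some i}

lemma isProbabilityMeasure_colorM (hα : ∀ j, 0 ≤ α j) (hsum : ∑ j, α j = 1) (hp : 0 ≤ p)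
    (hp' : p ≤ 1) : IsProbabilityMeasure (colorM q α p) where
  measure_univ := by
    simp only [colorM, Measure.coe_add, Pi.add_apply, Measure.coe_smul, Pi.smul_apply,
      measure_univ, Measure.coe_finsetSum, Finset.sum_apply, smul_eq_mul, mul_one]
    rw [← ENNReal.ofReal_sum_of_nonneg fun j _ ↦ mul_nonneg (hα j) hp, ← sum_mul, hsum, one_mul,
      ← ENNReal.ofReal_add (sub_nonneg.2 hp') hp, sub_add_cancel, ENNReal.ofReal_one]

lemma colorM_singleton_some (α : Fin q → ℝ) (p : ℝ) (i : Fin q) :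
    colorM q α p {some i} = ENNReal.ofReal (α i * p) := by
  simp [colorM, Set.indicator_apply]

instance [IsProbabilityMeasure (colorM q α p)] : IsProbabilityMeasure (graphM n q α p) :=
  inferInstanceAs (IsProbabilityMeasure (Measure.pi _))

lemma graphM_real_eq_some [IsProbabilityMeasure (colorM q α p)] (e : Fin n × Fin n) :
    (graphM n q α p).real {f | f e = some i} = (colorM q α p).real {some i} :=
  (measurePreserving_eval (fun _ ↦ colorM q α p) e).measureReal_preimage
    (MeasurableSet.of_discrete (s := {some i})).nullMeasurableSet

lemma graphM_real_lt_edgeCount_le [IsProbabilityMeasure (colorM q α p)] {r : ℝ} (hr : 0 ≤ r)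
    (hαp : α i * p ≤ r) {l : ℝ} (hl : 1 ≤ l) (m : ℝ) (S T : Finset (Fin n)) :
    (graphM n q α p).real {f | m < edgeCount f i S T} ≤
      l ^ (-m) * Real.exp (l * r * (#S * #T)) := by
  have hind : iIndepSet (fun e ↦ {f : Fin n × Fin n → Option (Fin q) | f e = some i})
      (graphM n q α p) :=
    iIndepSet_pi (A := fun _ ↦ {some i}) fun _ ↦ .of_discrete
  have hcolor : (colorM q α p).real {some i} ≤ r :=
    ENNReal.toReal_le_of_le_ofReal hr <|
      (colorM_singleton_some α p i).trans_le (ENNReal.ofReal_le_ofReal hαp)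
  calc (graphM n q α p).real {f | m < edgeCount f i S T}
      ≤ (graphM n q α p).real {f | m ≤ edgeCount f i S T} :=
        measureReal_mono (Set.ofPred_subset_ofPred.2 fun _ ↦ le_of_lt)
    _ ≤ l ^ (-m) * Real.exp ((l - 1) *
          ∑ e ∈ S ×ˢ T, (graphM n q α p).real {f | f e = some i}) :=
        measureReal_le_card_filter_le hind (fun _ ↦ .of_discrete) (S ×ˢ T) hl m
    _ = l ^ (-m) * Real.exp ((l - 1) * (colorM q α p).real {some i} * (#S * #T)) := by
        simp only [graphM_real_eq_some, sum_const, card_product, nsmul_eq_mul, Nat.cast_mul]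
        ring_nf
    _ ≤ l ^ (-m) * Real.exp (l * r * (#S * #T)) := by
        gcongr
        exact sub_le_self l zero_le_one

lemma graphM_real_two_mul_lt_edgeCount_le [IsProbabilityMeasure (colorM q α p)] {r : ℝ}
    (hr : 0 < r) (hαp : α i * p ≤ r) {S : Finset (Fin n)} (hS : S.Nonempty)
    (hSr : #S * r ≤ 2) {T : Finset (Fin n)} {t : ℝ} (hT : #T ≤ t) :
    (graphM n q α p).real {f | 2 * t < edgeCount f i S T} ≤
      (#S * r / 2) ^ (2 * t) * Real.exp (2 * t) := by
  have : (0 : ℝ) < #S := by exact_mod_cast hS.card_pos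
  have hv : 0 < #S * r / 2 := by positivity
  -- The base `l = 2 / (#S * r)` keeps the exponent `l * r * (#S * #T)` below `2 * t`.
  have hl : 1 ≤ (#S * r / 2)⁻¹ := (one_le_inv₀ hv).2 (by linarith)
  have hmean : (#S * r / 2)⁻¹ * r * (#S * #T) = 2 * #T := by field_simp
  refine (graphM_real_lt_edgeCount_le hr.le hαp hl (2 * t) S T).trans ?_
  rw [hmean, Real.inv_rpow hv.le, Real.rpow_neg hv.le, inv_inv]
  gcongr

lemma graphM_real_exists_lt_edgeCount_le [IsProbabilityMeasure (colorM q α p)] {r : ℝ}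
    (hr : 0 < r) (hαp : α i * p ≤ r) {S : Finset (Fin n)} (hS : S.Nonempty)
    (hSr : #S * r ≤ 2) {t : ℝ} (ht : 0 < t) (htn : t ≤ n) :
    (graphM n q α p).real {f | ∃ T : Finset (Fin n), #T ≤ t ∧ 2 * t < edgeCount f i S T} ≤
      (Real.exp 3 * (n / t) * (#S * r / 2) ^ 2) ^ t := by
  have hcount : (#{T : Finset (Fin n) | (#T : ℝ) ≤ t} : ℝ) ≤ Real.exp t * (n / t) ^ t := by
    simpa only [Fintype.card_fin] using
      card_filter_card_le_le (V := Fin n) ht (by rwa [Fintype.card_fin])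
  calc (graphM n q α p).real {f | ∃ T : Finset (Fin n), #T ≤ t ∧ 2 * t < edgeCount f i S T}
      = (graphM n q α p).real
          (⋃ T ∈ ({T | (#T : ℝ) ≤ t} : Finset (Finset (Fin n))),
            {f | 2 * t < edgeCount f i S T}) := by
        congr 1
        ext f
        simp
    _ ≤ ∑ T : Finset (Fin n) with (#T : ℝ) ≤ t,
          (graphM n q α p).real {f | 2 * t < edgeCount f i S T} :=
        measureReal_biUnion_finset_le _ _
    _ ≤ ∑ T : Finset (Fin n) with (#T : ℝ) ≤ t, (#S * r / 2) ^ (2 * t) * Real.exp (2 * t) :=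
        sum_le_sum fun T hT ↦
          graphM_real_two_mul_lt_edgeCount_le hr hαp hS hSr (mem_filter.1 hT).2
    _ ≤ Real.exp t * (n / t) ^ t * ((#S * r / 2) ^ (2 * t) * Real.exp (2 * t)) := by
        rw [sum_const, nsmul_eq_mul]
        gcongr
    _ = (Real.exp 3 * (n / t) * (#S * r / 2) ^ 2) ^ t := by
        rw [Real.mul_rpow (by positivity) (by positivity),
          Real.mul_rpow (by positivity) (by positivity), ← Real.exp_mul,
          Real.rpow_mul (by positivity), show 3 * t = t + 2 * t by ring, Real.exp_add,
          Real.rpow_ofNat]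
        ring

lemma graphM_real_exists_lt_edgeCount_le_unionRate [IsProbabilityMeasure (colorM q α p)]
    {η u : ℝ} (hη : 0 < η) (hη' : η ^ 2 ≤ 20) (hu : 1 ≤ u) (hαp : α i * p ≤ 3 * u / (2 * η * n))
    {S : Finset (Fin n)} (hS : S.Nonempty) (hSn : u * #S ≤ η ^ 2 * n / 20) :
    (graphM n q α p).real
        {f | ∃ T : Finset (Fin n), #T ≤ u * #S ∧ 2 * (u * #S) < edgeCount f i S T} ≤
      (unionRate η u * (#S / n)) ^ #S := by
  have hs : (0 : ℝ) < #S := by exact_mod_cast hS.card_pos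
  have hn : (0 : ℝ) < n := hs.trans_le (by exact_mod_cast card_finset_fin_le S)
  have hSr : #S * (3 * u / (2 * η * n)) ≤ 2 := by
    rw [mul_div_assoc', div_le_iff₀ (by positivity)]
    nlinarith [mul_pos hη hn]
  rw [← Real.rpow_natCast]
  exact (graphM_real_exists_lt_edgeCount_le (by positivity) hαp hS hSr (by positivity)
    (by nlinarith)).trans (rpow_le_unionRate_mul_rpow hη hu hs hn hSn)

lemma graphM_real_exists_exists_lt_edgeCount_le [IsProbabilityMeasure (colorM q α p)]
    {η u : ℝ} (hη : 0 < η) (hη' : η ^ 2 ≤ 20) (hu : 1 ≤ u) (hαp : α i * p ≤ 3 * u / (2 * η * n))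
    (hR : Real.exp 1 * unionRate η u ≤ 1 / 2) :
    (graphM n q α p).real {f | ∃ S T : Finset (Fin n), u * #S ≤ η ^ 2 * n / 20 ∧
        #T ≤ u * #S ∧ 2 * (u * #S) < edgeCount f i S T} ≤
      2 * (Real.exp 1 * unionRate η u) := by
  have hR₀ : 0 ≤ unionRate η u := by unfold unionRate; positivity
  let E (S : Finset (Fin n)) : Set (Fin n × Fin n → Option (Fin q)) :=
    {f | ∃ T : Finset (Fin n), #T ≤ u * #S ∧ 2 * (u * #S) < edgeCount f i S T}
  let F : Finset (Finset (Fin n)) := {S | S.Nonempty ∧ u * #S ≤ η ^ 2 * n / 20}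
  calc _ ≤ (graphM n q α p).real (⋃ S ∈ F, E S) := by
        refine measureReal_mono ?_ (measure_ne_top _ _)
        rintro f ⟨S, T, hSn, hT, he⟩
        have hS : S.Nonempty := by
          by_contra hS
          simp [not_nonempty_iff_eq_empty.1 hS, edgeCount] at he
        simp only [Set.mem_iUnion]
        exact ⟨S, by simp [F, hS, hSn], T, hT, he⟩
    _ ≤ ∑ S ∈ F, (graphM n q α p).real (E S) := measureReal_biUnion_finset_le _ _
    _ ≤ ∑ S ∈ F, (unionRate η u * (#S / n)) ^ #S := by
        refine sum_le_sum fun S hS ↦ ?_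
        obtain ⟨hS, hSn⟩ := (mem_filter.1 hS).2
        exact graphM_real_exists_lt_edgeCount_le_unionRate hη hη' hu hαp hS hSn
    _ ≤ ∑ S : Finset (Fin n) with S.Nonempty, (unionRate η u * (#S / n)) ^ #S :=
        sum_le_sum_of_subset_of_nonneg (monotone_filter_right _ fun _ _ h ↦ h.1)
          fun _ _ _ ↦ by positivity
    _ ≤ 2 * (Real.exp 1 * unionRate η u) := by
        simpa only [Fintype.card_fin] using
          sum_nonempty_mul_card_div_pow_card_le (V := Fin n) hR₀ hR

end ColoredBipartiteGraph

lemma tendsto_log_natCast_atTop : Tendsto (fun n : ℕ ↦ Real.log n) atTop atTop :=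
  Real.tendsto_log_atTop.comp tendsto_natCast_atTop_atTop

lemma eventually_isProbabilityMeasure_colorM {q : ℕ} {α : Fin q → ℝ} (hα : ∀ j, 0 ≤ α j)
    (hsum : ∑ j, α j = 1) {p : ℕ → ℝ} (hp : ∀ᶠ n in atTop, 0 ≤ p n)
    (hp' : ∀ᶠ n : ℕ in atTop, p n ≤ 3 / 2 * (Real.log n / n)) :
    ∀ᶠ n in atTop, IsProbabilityMeasure (colorM q α (p n)) := by
  have hlim : Tendsto (fun n : ℕ ↦ 3 / 2 * (Real.log n / n)) atTop (𝓝 0) := by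
    simpa using (Real.isLittleO_log_id_atTop.tendsto_div_nhds_zero.comp
      tendsto_natCast_atTop_atTop).const_mul (3 / 2)
  filter_upwards [hp, hp', hlim.eventually_le_const one_pos] with n h₀ h₁ h₂
  exact isProbabilityMeasure_colorM hα hsum h₀ (h₁.trans h₂)

lemma eventually_log_add_div_bounds {w : ℕ → ℝ} (hw : w =o[atTop] fun n : ℕ ↦ Real.log n) :
    (∀ᶠ n : ℕ in atTop, 0 ≤ (Real.log n + w n) / n) ∧
      ∀ᶠ n : ℕ in atTop, (Real.log n + w n) / n ≤ 3 / 2 * (Real.log n / n) := by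
  rw [← eventually_and]
  filter_upwards [hw.bound one_half_pos, tendsto_log_natCast_atTop.eventually_ge_atTop 0]
    with n hwn hlog
  rw [Real.norm_of_nonneg hlog, Real.norm_eq_abs, abs_le] at hwn
  rw [mul_div_assoc']
  constructor
  · exact div_nonneg (by linarith) n.cast_nonneg
  · gcongr
    linarith

theorem lemma_a_general {q : ℕ} {α : Fin q → ℝ} (hα : ∀ j, 0 ≤ α j) (hsum : ∑ j, α j = 1)
    {i : Fin q} (hi : 0 < α i) {η : ℝ} (hη : 0 < η) (hη' : η ^ 2 ≤ 20)
    {p : ℕ → ℝ} (hp : ∀ᶠ n in atTop, 0 ≤ p n)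
    (hp' : ∀ᶠ n : ℕ in atTop, p n ≤ 3 / 2 * (Real.log n / n)) :
    Tendsto (fun n ↦
      graphM n q α (p n)
        {f | ¬ ∃ S T : Finset (Fin n),
          #S ≤ η / (20 * α i) * n / Real.log n ∧
          #T ≤ α i * η * #S * Real.log n ∧
          2 * (α i * η * #S * Real.log n) < edgeCount f i S T})
      atTop (𝓝 1) := by
  let u (n : ℕ) : ℝ := α i * η * Real.log n
  have hu : Tendsto u atTop atTop := tendsto_log_natCast_atTop.const_mul_atTop (by positivity)
  have hrate : Tendsto (fun n ↦ Real.exp 1 * unionRate η (u n)) atTop (𝓝 0) := by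
    simpa using ((tendsto_unionRate η).comp hu).const_mul (Real.exp 1)
  have hprob := eventually_isProbabilityMeasure_colorM hα hsum hp hp'
  refine tendsto_measure_compl_one (hprob.mono fun _ _ ↦ inferInstance) (fun _ ↦ .of_discrete)
    (squeeze_zero' (.of_forall fun _ ↦ measureReal_nonneg) ?_
      (by simpa using hrate.const_mul 2))
  filter_upwards [hprob, hp', hu.eventually_ge_atTop 1, eventually_gt_atTop 0,
    tendsto_log_natCast_atTop.eventually_gt_atTop 0,
    hrate.eventually_le_const one_half_pos] with n _ hpn hun hn hlog hR
  have hαp : α i * p n ≤ 3 * u n / (2 * η * n) := by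
    calc α i * p n ≤ α i * (3 / 2 * (Real.log n / n)) := by gcongr
      _ = 3 * u n / (2 * η * n) := by simp only [u]; field_simp
  refine (measureReal_mono ?_ (measure_ne_top _ _)).trans
    (graphM_real_exists_exists_lt_edgeCount_le hη hη' hun hαp hR)
  rintro f ⟨S, T, hS, hT, he⟩
  rw [mul_right_comm] at hT he
  refine ⟨S, T, ?_, hT, he⟩
  calc u n * #S ≤ u n * (η / (20 * α i) * n / Real.log n) := by gcongr
    _ = η ^ 2 * n / 20 := by simp only [u]; field_simp

/-- Lemma 2(a): with `γ_a = η/(20 αᵢ)`, w.h.p. there are no sets `S ⊆ A`, `T ⊆ B`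
with `γ_a log n ≤ |S| ≤ γ_a n/log n` and `|T| ≤ αᵢ η |S| log n` carrying more than
`2 αᵢ η |S| log n` edges of color `cᵢ`. -/
theorem lemma_a (q : ℕ) (hq : 1 ≤ q) (α : Fin q → ℝ)
    (hα : ∀ i, 0 < α i) (hsum : ∑ i, α i = 1)
    (i : Fin q) (η : ℝ) (hη : 0 < η) (hη1 : η ≤ 1)
    (w : ℕ → ℝ) (hw : Tendsto w atTop atTop)
    (hwo : w =o[atTop] fun n => Real.log n) :
    Tendsto (fun n =>
      graphM n q α ((Real.log n + w n) / n)
        {f | ¬ ∃ S T : Finset (Fin n),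
          η / (20 * α i) * Real.log n ≤ (S.card : ℝ) ∧
          (S.card : ℝ) ≤ η / (20 * α i) * n / Real.log n ∧
          (T.card : ℝ) ≤ α i * η * S.card * Real.log n ∧
          2 * (α i * η * S.card * Real.log n) <
            (((S ×ˢ T).filter fun e => f e = some i).card : ℝ)})
      atTop (nhds 1) := by
  obtain ⟨hp, hp'⟩ := eventually_log_add_div_bounds hwo
  refine tendsto_of_tendsto_of_tendsto_of_le_of_le'
    (lemma_a_general (fun j ↦ (hα j).le) hsum (hα i) hη (by nlinarith) hp hp')
    tendsto_const_nhds
    (.of_forall fun n ↦ measure_mono fun f hf ⟨S, T, _, hST⟩ ↦ hf ⟨S, T, hST⟩) ?_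
  filter_upwards [eventually_isProbabilityMeasure_colorM (fun j ↦ (hα j).le) hsum hp hp']
    with n _ using prob_le_one
end

section
/- Let β ∈ (0,1) and α ∈ (0,1] be constants and set γ_b = 10·log(e/β)/α. Then the sequence a_n = C(n, ⌊βn⌋)² · C(⌊βn⌋, ⌈γ_b·n/log n⌉) · exp(−(α·β·γ_b/4)·n) tends to 0 as n → ∞, where C(a,b) denotes the binomial coefficient. -/
open Filter

/-! For `k ≤ β n` with `0 < β ≤ 1`, taking `x = β` in `C(n,k) ≤ (nx)^k / (k! x^k) ≤ exp(nx) / x^k`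
gives `C(n,k) ≤ exp(β log(e/β) n)`. Hence `C(n,⌊βn⌋)²` grows at exponential rate at most
`2 β log(e/β)`. Since `δ log(e/δ) → 0` as `δ → 0`, the same bound makes `C(⌊βn⌋,k)` subexponential
when `k = o(n)`, in particular for `k = ⌈γ_b n/log n⌉`. The decay rate `αβγ_b/4 = (5/2) β log(e/β)`
exceeds `2 β log(e/β)`, so exponential decay remains. -/

open Asymptotics Topology
open scoped Nat

lemma log_exp_one_div {x : ℝ} (hx : x ≠ 0) : Real.log (Real.exp 1 / x) = 1 - Real.log x := by
  rw [Real.log_div (Real.exp_ne_zero 1) hx, Real.log_exp]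

lemma choose_mul_pow_le_exp (n k : ℕ) {x : ℝ} (hx : 0 ≤ x) :
    (n.choose k : ℝ) * x ^ k ≤ Real.exp (n * x) :=
  calc (n.choose k : ℝ) * x ^ k ≤ (n : ℝ) ^ k / k ! * x ^ k := by
        gcongr
        exact Nat.choose_le_pow_div k n
    _ = (n * x) ^ k / k ! := by ring
    _ ≤ Real.exp (n * x) := Real.pow_div_factorial_le_exp _ (by positivity) k

lemma choose_le_exp_of_le_mul {n k : ℕ} {β : ℝ} (hβ : 0 < β) (hβ1 : β ≤ 1) (hk : k ≤ β * n) :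
    (n.choose k : ℝ) ≤ Real.exp (β * Real.log (Real.exp 1 / β) * n) := by
  have hpow : Real.exp (β * n * Real.log β) ≤ β ^ k := by
    rw [← Real.rpow_natCast, Real.rpow_def_of_pos hβ, Real.exp_le_exp, mul_comm (Real.log β)]
    exact mul_le_mul_of_nonpos_right hk (Real.log_nonpos hβ.le hβ1)
  calc (n.choose k : ℝ) ≤ Real.exp (n * β) / Real.exp (β * n * Real.log β) := by
        rw [le_div_iff₀ (Real.exp_pos _)]
        exact (mul_le_mul_of_nonneg_left hpow (Nat.cast_nonneg _)).trans
          (choose_mul_pow_le_exp n k hβ.le)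
    _ = Real.exp (β * Real.log (Real.exp 1 / β) * n) := by
        rw [← Real.exp_sub, log_exp_one_div hβ.ne']
        ring_nf

lemma tendsto_mul_log_exp_one_div_nhds_zero :
    Tendsto (fun δ : ℝ => δ * Real.log (Real.exp 1 / δ)) (𝓝 0) (𝓝 0) := by
  have hcont : Tendsto (fun δ : ℝ => δ + Real.negMulLog δ) (𝓝 0) (𝓝 0) :=
    (continuous_id.add Real.continuous_negMulLog).tendsto' 0 0 (by simp)
  refine hcont.congr fun δ => ?_
  rcases eq_or_ne δ 0 with rfl | hδ
  · simp
  · rw [log_exp_one_div hδ, Real.negMulLog]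
    ring

lemma eventually_forall_choose_le_exp_of_isLittleO {k : ℕ → ℕ}
    (hk : (fun n => (k n : ℝ)) =o[atTop] (fun n => (n : ℝ))) {ε : ℝ} (hε : 0 < ε) :
    ∀ᶠ n : ℕ in atTop, ∀ m ≤ n, (m.choose (k n) : ℝ) ≤ Real.exp (ε * n) := by
  obtain ⟨δ, hδε, hδ, hδ1⟩ : ∃ δ : ℝ, δ * Real.log (Real.exp 1 / δ) < ε ∧ 0 < δ ∧ δ < 1 :=
    (((tendsto_mul_log_exp_one_div_nhds_zero.eventually_lt_const hε).filter_mono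
      nhdsWithin_le_nhds).and (Ioo_mem_nhdsGT one_pos)).exists
  filter_upwards [hk.bound hδ] with n hn m hm
  have hkn : k n ≤ δ * n := by simpa using hn
  calc (m.choose (k n) : ℝ) ≤ n.choose (k n) := by
        exact_mod_cast Nat.choose_le_choose (k n) hm
    _ ≤ Real.exp (δ * Real.log (Real.exp 1 / δ) * n) := choose_le_exp_of_le_mul hδ hδ1.le hkn
    _ ≤ Real.exp (ε * n) := by gcongr

lemma isLittleO_natCeil {ι : Type*} {l : Filter ι} {f g : ι → ℝ} (hf : f =o[l] g)
    (hg : Tendsto (norm ∘ g) l atTop) : (fun i => (⌈f i⌉₊ : ℝ)) =o[l] g := by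
  have hone : (fun _ => (1 : ℝ)) =o[l] g := isLittleO_const_left.2 (Or.inr hg)
  refine IsBigO.trans_isLittleO (.of_norm_le fun i => ?_) (hf.norm_left.add hone)
  calc ‖(⌈f i⌉₊ : ℝ)‖ = ⌈f i⌉₊ := Real.norm_natCast _
    _ ≤ ⌈‖f i‖⌉₊ := by gcongr; exact Real.le_norm_self _
    _ ≤ ‖f i‖ + 1 := (Nat.ceil_lt_add_one (norm_nonneg _)).le

lemma isLittleO_const_mul_div_log (γ : ℝ) :
    (fun x : ℝ => γ * x / Real.log x) =o[atTop] (fun x => x) := by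
  have hinv : (fun x : ℝ => γ / Real.log x) =o[atTop] (fun _ => (1 : ℝ)) :=
    (isLittleO_one_iff ℝ).2 (Real.tendsto_log_atTop.const_div_atTop γ)
  simpa only [mul_one, mul_div_assoc', mul_comm γ] using
    (isBigO_refl (fun x : ℝ => x) atTop).mul_isLittleO hinv

lemma isLittleO_natCeil_const_mul_div_log (γ : ℝ) :
    (fun n : ℕ => (⌈γ * n / Real.log n⌉₊ : ℝ)) =o[atTop] (fun n => (n : ℝ)) :=
  (isLittleO_natCeil (isLittleO_const_mul_div_log γ) tendsto_norm_atTop_atTop).comp_tendsto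
    tendsto_natCast_atTop_atTop

theorem lemma_b_estimate_general {β c : ℝ} (hβ : 0 < β) (hβ1 : β ≤ 1) {k : ℕ → ℕ}
    (hk : (fun n => (k n : ℝ)) =o[atTop] (fun n => (n : ℝ)))
    (hc : 2 * (β * Real.log (Real.exp 1 / β)) < c) :
    Tendsto (fun n : ℕ =>
      (n.choose ⌊β * n⌋₊ : ℝ) ^ 2 * ((⌊β * n⌋₊).choose (k n) : ℝ) * Real.exp (-c * n))
      atTop (𝓝 0) := by
  set h := β * Real.log (Real.exp 1 / β)
  obtain ⟨ε, hε, hεc⟩ : ∃ ε > 0, 2 * h + 2 * ε = c := ⟨(c - 2 * h) / 2, by linarith, by ring⟩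
  have hdecay : Tendsto (fun n : ℕ => Real.exp (-(ε * n))) atTop (𝓝 0) :=
    Real.tendsto_exp_neg_atTop_nhds_zero.comp (tendsto_natCast_atTop_atTop.const_mul_atTop hε)
  refine squeeze_zero' (.of_forall fun n => by positivity) ?_ hdecay
  filter_upwards [eventually_forall_choose_le_exp_of_isLittleO hk hε] with n hsubexp
  have hfloor : (⌊β * n⌋₊ : ℝ) ≤ β * n := Nat.floor_le (by positivity)
  have hfloor_le : ⌊β * n⌋₊ ≤ n :=
    Nat.floor_le_of_le (mul_le_of_le_one_left n.cast_nonneg hβ1)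
  calc (n.choose ⌊β * n⌋₊ : ℝ) ^ 2 * ((⌊β * n⌋₊).choose (k n) : ℝ) * Real.exp (-c * n)
      ≤ Real.exp (h * n) ^ 2 * Real.exp (ε * n) * Real.exp (-c * n) := by
        gcongr
        · exact choose_le_exp_of_le_mul hβ hβ1 hfloor
        · exact hsubexp _ hfloor_le
    _ = Real.exp (-(ε * n)) := by
        rw [← Real.exp_nat_mul, ← Real.exp_add, ← Real.exp_add, ← hεc]
        push_cast
        ring_nf

lemma two_mul_mul_log_lt_decay_rate {β α : ℝ} (hβ : 0 < β) (hβ1 : β ≤ 1) (hα : α ≠ 0) :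
    2 * (β * Real.log (Real.exp 1 / β)) <
      α * β * (10 * Real.log (Real.exp 1 / β) / α) / 4 := by
  have hlog : 0 < Real.log (Real.exp 1 / β) :=
    Real.log_pos ((one_lt_div hβ).2 (hβ1.trans_lt (Real.one_lt_exp_iff.2 one_pos)))
  have hrate : α * β * (10 * Real.log (Real.exp 1 / β) / α) / 4 =
      5 / 2 * (β * Real.log (Real.exp 1 / β)) := by
    field_simp
    norm_num
  rw [hrate]
  exact mul_lt_mul_of_pos_right (by norm_num) (mul_pos hβ hlog)

/-- with `γ_b = 10 log(e/β)/α`, the union-bound estimate of Lemma 2(b),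
`C(n,⌊βn⌋)² · C(⌊βn⌋,⌈γ_b n/log n⌉) · exp(−(αβγ_b/4) n)`, tends to `0`. -/
theorem lemma_b_estimate (β α γb : ℝ) (hβ : 0 < β) (hβ1 : β < 1)
    (hα : 0 < α) (hα1 : α ≤ 1) (hγb : γb = 10 * Real.log (Real.exp 1 / β) / α) :
    Tendsto (fun n : ℕ =>
      ((n.choose ⌊β * n⌋₊ : ℝ)) ^ 2 * ((⌊β * n⌋₊).choose ⌈γb * n / Real.log n⌉₊ : ℝ) *
        Real.exp (-(α * β * γb / 4) * n))
      atTop (nhds 0) :=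
  lemma_b_estimate_general hβ hβ1.le (isLittleO_natCeil_const_mul_div_log γb)
    (hγb ▸ two_mul_mul_log_lt_decay_rate hβ hβ1.le hα.ne')
end

section
/- Let β ∈ (0,1) and α ∈ (0,1] be constants, set γ_d = (4/α)·log(e/β), and for each n ≥ 3 let p_n = (log n + ω(n))/n where ω(n) → ∞ and ω(n) = o(log n). Then the sequence a_n = C(n, ⌊βn⌋)² · C(⌊βn⌋, ⌈γ_d·n/log n⌉) · (1 − α·p_n)^{⌊βn⌋·⌈γ_d·n/log n⌉} tends to 0 as n → ∞. -/
open Filter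
open Asymptotics Topology

/-! For every `x > 0`, `C(N, j) ≤ exp (x N) / x ^ j`, while `(1 - q) ^ (m k) ≤ exp (-q m k)`.
Suppose `m / n → β`, `k / n → 0` and `q k → c`. Taking `x = β` in the first binomial coefficient
and `x = δ` in the second bounds the whole product by `exp (n r_n)`, where
`r_n → 2 β (1 - log β) + δ β - β c`. When `c > 2 log (e / β)` this limit is negative for small `δ`.
In the application `q k → α γ`, since `k ~ γ n / log n` and `q ~ α log n / n`. -/

lemma choose_le_exp_mul_sub_mul_log {x : ℝ} (hx : 0 < x) (N j : ℕ) :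
    (N.choose j : ℝ) ≤ Real.exp (x * N - j * Real.log x) := by
  rw [Real.exp_sub, Real.exp_nat_mul, Real.exp_log hx, le_div_iff₀ (by positivity)]
  calc (N.choose j : ℝ) * x ^ j ≤ N ^ j / j.factorial * x ^ j := by
        gcongr; exact Nat.choose_le_pow_div j N
    _ = (x * N) ^ j / j.factorial := by ring
    _ ≤ Real.exp (x * N) := Real.pow_div_factorial_le_exp _ (by positivity) j

lemma one_sub_pow_le_exp_neg_mul {q : ℝ} (hq : q ≤ 1) (N : ℕ) :
    (1 - q) ^ N ≤ Real.exp (-(q * N)) := by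
  rw [← neg_mul, mul_comm, Real.exp_nat_mul]
  exact pow_le_pow_left₀ (sub_nonneg.2 hq) (Real.one_sub_le_exp_neg q) N

lemma choose_sq_mul_choose_mul_one_sub_pow_le_exp {x y q : ℝ} (hx : 0 < x) (hy : 0 < y)
    (hq : q ≤ 1) (n m k : ℕ) :
    (n.choose m : ℝ) ^ 2 * (m.choose k : ℝ) * (1 - q) ^ (m * k) ≤
      Real.exp (2 * (x * n - m * Real.log x) + (y * m - k * Real.log y) - m * (q * k)) := by
  have := sub_nonneg.2 hq
  calc (n.choose m : ℝ) ^ 2 * (m.choose k : ℝ) * (1 - q) ^ (m * k)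
      ≤ Real.exp (x * n - m * Real.log x) ^ 2 * Real.exp (y * m - k * Real.log y) *
          Real.exp (-(q * (m * k : ℕ))) := by
        gcongr
        · exact choose_le_exp_mul_sub_mul_log hx n m
        · exact choose_le_exp_mul_sub_mul_log hy m k
        · exact one_sub_pow_le_exp_neg_mul hq (m * k)
    _ = _ := by
        rw [← Real.exp_nat_mul, ← Real.exp_add, ← Real.exp_add]
        push_cast
        ring_nf

theorem tendsto_choose_sq_mul_choose_mul_one_sub_pow_zero {β c : ℝ} (hβ : 0 < β)
    {m k : ℕ → ℕ} {q : ℕ → ℝ} (hm : Tendsto (fun n => (m n / n : ℝ)) atTop (𝓝 β))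
    (hk : Tendsto (fun n => (k n / n : ℝ)) atTop (𝓝 0)) (hq : ∀ᶠ n in atTop, q n ≤ 1)
    (hqk : Tendsto (fun n => q n * k n) atTop (𝓝 c))
    (hc : 2 * Real.log (Real.exp 1 / β) < c) :
    Tendsto (fun n => (n.choose (m n) : ℝ) ^ 2 * ((m n).choose (k n) : ℝ) *
      (1 - q n) ^ (m n * k n)) atTop (𝓝 0) := by
  rw [Real.log_div (Real.exp_ne_zero 1) hβ.ne', Real.log_exp] at hc
  obtain ⟨δ, hδ, hδc⟩ : ∃ δ > 0, 2 * (1 - Real.log β) + δ < c :=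
    ⟨(c - 2 * (1 - Real.log β)) / 2, by linarith, by linarith⟩
  let r (n : ℕ) : ℝ := 2 * (β - m n / n * Real.log β) + (δ * (m n / n) - k n / n * Real.log δ) -
    m n / n * (q n * k n)
  have hr : Tendsto r atTop
      (𝓝 (2 * (β - β * Real.log β) + (δ * β - 0 * Real.log δ) - β * c)) :=
    (((hm.mul_const _).const_sub β).const_mul 2 |>.add
      ((hm.const_mul δ).sub (hk.mul_const _))).sub (hm.mul hqk)
  have hr_neg : 2 * (β - β * Real.log β) + (δ * β - 0 * Real.log δ) - β * c < 0 := by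
    linear_combination β * hδc
  have hexp : Tendsto (fun n : ℕ => Real.exp (n * r n)) atTop (𝓝 0) :=
    Real.tendsto_exp_atBot.comp (tendsto_natCast_atTop_atTop.atTop_mul_neg hr_neg hr)
  refine squeeze_zero' ?_ ?_ hexp
  · filter_upwards [hq] with n hqn
    have := sub_nonneg.2 hqn
    positivity
  · filter_upwards [hq, eventually_ne_atTop 0] with n hqn hn
    refine (choose_sq_mul_choose_mul_one_sub_pow_le_exp hβ hδ hqn n (m n) (k n)).trans_eq ?_
    congr 1
    simp only [r]
    field_simp

lemma tendsto_log_div_natCast_zero : Tendsto (fun n : ℕ => Real.log n / n) atTop (𝓝 0) :=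
  (Real.isLittleO_log_id_atTop.comp_tendsto tendsto_natCast_atTop_atTop).tendsto_div_nhds_zero

lemma tendsto_natCast_div_log_atTop : Tendsto (fun n : ℕ => n / Real.log n) atTop atTop := by
  have hpos : ∀ᶠ n : ℕ in atTop, 0 < Real.log n / n := by
    filter_upwards [eventually_gt_atTop 1] with n hn
    have := Real.log_pos (Nat.one_lt_cast.2 hn)
    positivity
  simpa only [Function.comp_def, Pi.inv_def, inv_div] using
    (tendsto_nhdsWithin_iff.2 ⟨tendsto_log_div_natCast_zero, hpos⟩).inv_tendsto_nhdsGT_zero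

lemma tendsto_log_div_mul_natCeil_mul_div_log {γ : ℝ} (hγ : 0 ≤ γ) :
    Tendsto (fun n : ℕ => Real.log n / n * ⌈γ * n / Real.log n⌉₊) atTop (𝓝 γ) := by
  refine ((tendsto_nat_ceil_mul_div_atTop hγ).comp tendsto_natCast_div_log_atTop).congr fun n => ?_
  rw [Function.comp_apply, ← mul_div_assoc, div_div_eq_mul_div, mul_comm, mul_div_right_comm]

lemma tendsto_natCeil_mul_div_log_div_zero {γ : ℝ} (hγ : 0 ≤ γ) :
    Tendsto (fun n : ℕ => (⌈γ * n / Real.log n⌉₊ / n : ℝ)) atTop (𝓝 0) := by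
  have hlog : Tendsto (fun n : ℕ => Real.log n) atTop atTop :=
    Real.tendsto_log_atTop.comp tendsto_natCast_atTop_atTop
  refine ((tendsto_log_div_mul_natCeil_mul_div_log hγ).div_atTop hlog).congr' ?_
  filter_upwards [hlog.eventually_ne_atTop 0] with n hn
  field_simp

theorem lemma_d_estimate_general {β α γ : ℝ} (hβ : 0 < β) (hγ : 0 ≤ γ)
    (hαγ : 2 * Real.log (Real.exp 1 / β) < α * γ)
    {p : ℕ → ℝ} (hp : p ~[atTop] fun n => Real.log n / n) :
    Tendsto (fun n : ℕ =>
      ((n.choose ⌊β * n⌋₊ : ℝ)) ^ 2 * ((⌊β * n⌋₊).choose ⌈γ * n / Real.log n⌉₊ : ℝ) *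
        (1 - α * p n) ^ (⌊β * n⌋₊ * ⌈γ * n / Real.log n⌉₊))
      atTop (𝓝 0) := by
  have hm : Tendsto (fun n : ℕ => (⌊β * n⌋₊ / n : ℝ)) atTop (𝓝 β) :=
    (tendsto_nat_floor_mul_div_atTop hβ.le).comp tendsto_natCast_atTop_atTop
  have hαp : Tendsto (fun n => α * p n) atTop (𝓝 (α * 0)) :=
    (hp.symm.tendsto_nhds tendsto_log_div_natCast_zero).const_mul α
  have hpk : Tendsto (fun n : ℕ => p n * ⌈γ * n / Real.log n⌉₊) atTop (𝓝 γ) :=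
    (hp.symm.mul .refl).tendsto_nhds (tendsto_log_div_mul_natCeil_mul_div_log hγ)
  refine tendsto_choose_sq_mul_choose_mul_one_sub_pow_zero hβ hm
    (tendsto_natCeil_mul_div_log_div_zero hγ) (hαp.eventually_le_const (by simp)) ?_ hαγ
  simpa only [mul_assoc] using hpk.const_mul α

/-- with `γ_d = (4/α) log(e/β)` and `p_n = (log n + ω(n))/n`, the union-bound
estimate of Lemma 2(d),
`C(n,⌊βn⌋)² · C(⌊βn⌋,⌈γ_d n/log n⌉) · (1 − α p_n)^{⌊βn⌋·⌈γ_d n/log n⌉}`, tends to `0`. -/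
theorem lemma_d_estimate (β α γd : ℝ) (hβ : 0 < β) (hβ1 : β < 1)
    (hα : 0 < α) (hα1 : α ≤ 1) (hγd : γd = 4 / α * Real.log (Real.exp 1 / β))
    (w : ℕ → ℝ) (hw : Tendsto w atTop atTop)
    (hwo : w =o[atTop] fun n => Real.log n)
    (p : ℕ → ℝ) (hp : ∀ n : ℕ, p n = (Real.log n + w n) / n) :
    Tendsto (fun n : ℕ =>
      ((n.choose ⌊β * n⌋₊ : ℝ)) ^ 2 * ((⌊β * n⌋₊).choose ⌈γd * n / Real.log n⌉₊ : ℝ) *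
        (1 - α * p n) ^ (⌊β * n⌋₊ * ⌈γd * n / Real.log n⌉₊))
      atTop (nhds 0) := by
  have hlog : 0 < Real.log (Real.exp 1 / β) :=
    Real.log_pos ((one_lt_div hβ).2 (hβ1.trans (Real.one_lt_exp_iff.2 one_pos)))
  have hαγ : α * γd = 4 * Real.log (Real.exp 1 / β) := by rw [hγd]; field_simp
  have hp_equiv : p ~[atTop] fun n => Real.log n / n := by
    rw [funext hp]
    exact (IsEquivalent.refl.add_isLittleO hwo).div .refl
  exact lemma_d_estimate_general hβ (by rw [hγd]; positivity) (by linarith) hp_equiv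
end
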